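/- With respect to the operation (p₀,y₀,t₀) ∘ (p,y,t) = (p√(p₀²+1) + p₀√(1+p²), y₀ + y√(p₀²+1) + p₀t, t₀ + t√(p₀²+1) + p₀y) on ℝ³, the element (0,0,0) is a two-sided identity and (p,y,t)⁻¹ = (-p, pt - y/√(p²+1) - p²y/√(p²+1), -t√(p²+1) + py) is a two-sided inverse of (p,y,t). -/

import Mathlib

noncomputable def lorentzMul (a b : ℝ × ℝ × ℝ) : ℝ × ℝ × ℝ :=
  (b.1 * Real.sqrt (a.1 ^ 2 + 1) + a.1 * Real.sqrt (1 + b.1 ^ 2),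
   a.2.1 + b.2.1 * Real.sqrt (a.1 ^ 2 + 1) + a.1 * b.2.2,
   a.2.2 + b.2.2 * Real.sqrt (a.1 ^ 2 + 1) + a.1 * b.2.1)

noncomputable def lorentzInv (z : ℝ × ℝ × ℝ) : ℝ × ℝ × ℝ :=
  (-z.1,
   z.1 * z.2.2 - z.2.1 / Real.sqrt (z.1 ^ 2 + 1) - z.1 ^ 2 * z.2.1 / Real.sqrt (z.1 ^ 2 + 1),
   -z.2.2 * Real.sqrt (z.1 ^ 2 + 1) + z.1 * z.2.1)

theorem lorentzInv_eq (p y t : ℝ) :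
    lorentzInv (p, y, t) =
      (-p, p * t - y * Real.sqrt (p ^ 2 + 1), -t * Real.sqrt (p ^ 2 + 1) + p * y) := by
  have hs : Real.sqrt (p ^ 2 + 1) ^ 2 = p ^ 2 + 1 := Real.sq_sqrt (by positivity)
  have hne : Real.sqrt (p ^ 2 + 1) ≠ 0 := by positivity
  simp only [lorentzInv, Prod.mk.injEq, true_and, and_true]
  field_simp
  linear_combination y * hs

theorem lorentz_identity_and_inverse :
    (∀ z : ℝ × ℝ × ℝ, lorentzMul ((0 : ℝ), (0 : ℝ), (0 : ℝ)) z = z ∧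
      lorentzMul z ((0 : ℝ), (0 : ℝ), (0 : ℝ)) = z) ∧
    (∀ z : ℝ × ℝ × ℝ, lorentzMul (lorentzInv z) z = ((0 : ℝ), (0 : ℝ), (0 : ℝ)) ∧
      lorentzMul z (lorentzInv z) = ((0 : ℝ), (0 : ℝ), (0 : ℝ))) := by
  refine ⟨fun z => ⟨by simp [lorentzMul], by simp [lorentzMul]⟩, ?_⟩
  rintro ⟨p, y, t⟩
  have hs : Real.sqrt (p ^ 2 + 1) ^ 2 = p ^ 2 + 1 := Real.sq_sqrt (by positivity)
  simp only [lorentzInv_eq, lorentzMul, neg_sq, add_comm (1 : ℝ), Prod.mk.injEq]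
  refine ⟨⟨by ring, by ring, by ring⟩, by ring, ?_, ?_⟩
  · linear_combination -y * hs
  · linear_combination -t * hs
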